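/- Let T ∈ 𝓔^ω be orientation-preserving with T(π(0)) = π(0) and let f ∈ 𝓒^1. If (f,T) has a unique maximizing measure, then either T|K(f,T) is Sturmian-like or f has a supercritical value (i.e., K(f,T) has an f-supercritical value). -/

import Mathlib

open MeasureTheory Topology Filter Set
open scoped UniformConvergence

noncomputable section

/-- The circle `ℝ/ℤ`. -/
abbrev Circle1 : Type := AddCircle (1 : ℝ)

/-- The canonical representative in `[0,1)` of a point of `ℝ/ℤ`. -/
noncomputable def rep (z : Circle1) : ℝ := (AddCircle.equivIco 1 0 z : ℝ)

/-- The circle map induced by a lift `F : ℝ → ℝ`. -/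
noncomputable def cmap (F : ℝ → ℝ) : Circle1 → Circle1 := fun z => ((F (rep z) : ℝ) : Circle1)

/-- The data determining the `C^r` topology: all derivatives of order `≤ r`, viewed in the
space of functions `ℝ → ℝ` with the uniform-convergence topology. -/
noncomputable def crSeq (r : ℕ∞) (f : ℝ → ℝ) : ℕ → (ℝ →ᵤ ℝ) :=
  fun k => UniformFun.ofFun (if (k : ℕ∞) ≤ r then iteratedDeriv k f else 0)

/-- The space `𝓒^r` of `C^r` functions `ℝ/ℤ → ℝ`. -/
def CrFun (r : ℕ∞) : Type := {f : Circle1 → ℝ // ContDiff ℝ r fun x : ℝ => f ↑x}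

/-- The `C^r` topology on `𝓒^r`. -/
noncomputable instance (r : ℕ∞) : TopologicalSpace (CrFun r) :=
  TopologicalSpace.induced (fun f : CrFun r => crSeq r fun x : ℝ => f.1 ↑x) inferInstance

/-- `F : ℝ → ℝ` is a lift of a `C^r` expanding circle map: it is `C^r`, sends `x+1` to
`F x + d` for a fixed integer `d`, and `|(Fⁿ)'| ≥ C λⁿ` for some `C > 0`, `λ > 1`. -/
def ExpandingLift (r : ℕ∞) (F : ℝ → ℝ) : Prop :=
  ContDiff ℝ r F ∧ (∃ d : ℤ, ∀ x : ℝ, F (x + 1) = F x + d) ∧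
    ∃ C > (0 : ℝ), ∃ l > (1 : ℝ), ∀ n : ℕ, 1 ≤ n → ∀ x : ℝ, C * l ^ n ≤ |deriv (F^[n]) x|

/-- The space `𝓔^r` of (lifts of) `C^r` expanding circle maps, with the `C^r` topology. -/
def ExpMap (r : ℕ∞) : Type := {F : ℝ → ℝ // ExpandingLift r F}

noncomputable instance (r : ℕ∞) : TopologicalSpace (ExpMap r) :=
  TopologicalSpace.induced (fun F : ExpMap r => crSeq r F.1) inferInstance

/-- `μ` is a `T`-invariant Borel probability measure. -/
def InvProb (T : Circle1 → Circle1) (μ : Measure Circle1) : Prop :=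
  IsProbabilityMeasure μ ∧ μ.map T = μ

/-- `β(f,T)`, the maximal ergodic average. -/
noncomputable def beta (f : Circle1 → ℝ) (T : Circle1 → Circle1) : ℝ :=
  sSup ((fun μ : Measure Circle1 => ∫ x, f x ∂μ) '' {μ | InvProb T μ})

/-- `μ` is a maximizing measure for `(f,T)`. -/
def IsMaximizing (f : Circle1 → ℝ) (T : Circle1 → Circle1) (μ : Measure Circle1) : Prop :=
  InvProb T μ ∧ ∫ x, f x ∂μ = beta f T

/-- `μ` is a periodic measure: an invariant measure supported on a periodic orbit. -/
def IsPeriodicMeasure (T : Circle1 → Circle1) (μ : Measure Circle1) : Prop :=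
  InvProb T μ ∧ ∃ x : Circle1, ∃ n : ℕ, 0 < n ∧ T^[n] x = x ∧
    μ (Set.range fun k : ℕ => T^[k] x) = 1

/-- `(f,T)` is uniquely maximized by a periodic measure. -/
def UniqMaxPeriodic (f : Circle1 → ℝ) (T : Circle1 → Circle1) : Prop :=
  ∃ μ : Measure Circle1, IsMaximizing f T μ ∧ IsPeriodicMeasure T μ ∧
    ∀ ν : Measure Circle1, IsMaximizing f T ν → ν = μ

/-- A (continuous) sub-action for `(f,T)`. -/
def IsSubaction (f : Circle1 → ℝ) (T : Circle1 → Circle1) (g : Circle1 → ℝ) : Prop :=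
  Continuous g ∧ ∀ x, g x + f x ≤ g (T x) + beta f T

/-- A calibrated sub-action for `(f,T)`. -/
def IsCalibrated (f : Circle1 → ℝ) (T : Circle1 → Circle1) (g : Circle1 → ℝ) : Prop :=
  IsSubaction f T g ∧ ∀ x, ∃ y, T y = x ∧ g y + f y = g x + beta f T

/-- `G_{f,T}`: the set of Lipschitz calibrated sub-actions of `(f,T)`. -/
def Gset (f : Circle1 → ℝ) (T : Circle1 → Circle1) : Set (Circle1 → ℝ) :=
  {g | (∃ K : NNReal, LipschitzWith K g) ∧ IsCalibrated f T g}

/-- The set `E_{f,T,g}`. -/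
def Eset (f : Circle1 → ℝ) (T : Circle1 → Circle1) (g : Circle1 → ℝ) : Set Circle1 :=
  {x | g x + f x = g (T x) + beta f T}

/-- The set `Λ*_{f,T,g}`. -/
def LambdaStar (f : Circle1 → ℝ) (T : Circle1 → Circle1) (g : Circle1 → ℝ) : Set Circle1 :=
  {x | ∀ n : ℕ, T^[n] x ∈ Eset f T g}

/-- The set `Λ_{f,T,g}`. -/
def Lambda (f : Circle1 → ℝ) (T : Circle1 → Circle1) (g : Circle1 → ℝ) : Set Circle1 :=
  ⋂ n : ℕ, T^[n] '' LambdaStar f T g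

/-- The set `K(f,T)`. -/
def Kset (f : Circle1 → ℝ) (T : Circle1 → Circle1) : Set Circle1 :=
  ⋃ g ∈ Gset f T, Lambda f T g

/-- The `(f,T)`-non-wandering set `Ω(f,T)`. -/
def OmegaSet (f : Circle1 → ℝ) (T : Circle1 → Circle1) : Set Circle1 :=
  {x | ∀ ε > (0 : ℝ), ∃ n : ℕ, 1 ≤ n ∧ ∃ z : Circle1, T^[n] z = x ∧ dist z x < ε ∧
    |∑ i ∈ Finset.range n, (f (T^[i] z) - beta f T)| < ε}

/-- `A` is a periodic orbit of `T`. -/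
def IsPeriodicOrbit (T : Circle1 → Circle1) (A : Set Circle1) : Prop :=
  ∃ x : Circle1, (∃ n : ℕ, 0 < n ∧ T^[n] x = x) ∧ A = Set.range fun k : ℕ => T^[k] x

/-- `A` is a `T`-minimal set: a nonempty compact invariant set with no proper nonempty
compact invariant subset. -/
def IsMinimalSet (T : Circle1 → Circle1) (A : Set Circle1) : Prop :=
  A.Nonempty ∧ IsCompact A ∧ T '' A ⊆ A ∧
    ∀ B ⊆ A, B.Nonempty → IsCompact B → T '' B ⊆ B → B = A

/-- The space of `C^r` families of functions on the circle with `q` parameters,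
i.e. maps `(t,x) ↦ f_t(x)` that are jointly `C^r` (the circle variable via a lift). -/
def FamFun (r : ℕ∞) (q : ℕ) : Type :=
  {G : ((Fin q → ℝ) × ℝ) → ℝ // ContDiff ℝ r G ∧ ∀ t x, G (t, x + 1) = G (t, x)}

noncomputable def famSeq (r : ℕ∞) (q : ℕ) (G : ((Fin q → ℝ) × ℝ) → ℝ) :
    (k : ℕ) → (((Fin q → ℝ) × ℝ) →ᵤ (((Fin q → ℝ) × ℝ) [×k]→L[ℝ] ℝ)) :=
  fun k => UniformFun.ofFun (if (k : ℕ∞) ≤ r then iteratedFDeriv ℝ k G else 0)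

/-- The `C^r` topology on the space of `C^r` families. -/
noncomputable instance (r : ℕ∞) (q : ℕ) : TopologicalSpace (FamFun r q) :=
  TopologicalSpace.induced (fun G : FamFun r q => famSeq r q G.1) inferInstance

/-- The member `f_t : ℝ/ℤ → ℝ` of a family, at the parameter `t`. -/
noncomputable def famMem {r : ℕ∞} {q : ℕ} (G : FamFun r q) (t : Fin q → ℝ) : Circle1 → ℝ :=
  fun z => G.1 (t, rep z)

/-- The product `m_∞` over `ℕ` of Lebesgue measure on `[0,1]`, realised as the pushforward of
the Haar probability measure of the compact group `(ℝ/ℤ)^ℕ` under the coordinatewise choice of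
representatives in `[0,1)`. -/
noncomputable def mInfty : Measure (ℕ → ℝ) :=
  Measure.map (fun (t : ℕ → Circle1) (n : ℕ) => rep (t n))
    (MeasureTheory.Measure.addHaarMeasure (⊤ : TopologicalSpace.PositiveCompacts (ℕ → Circle1)))

/-- `S` is an `N`-dimensionally shy subset of a normed real vector space `V`. -/
def NDimShy {V : Type*} [NormedAddCommGroup V] [NormedSpace ℝ V] (N : ℕ) (S : Set V) : Prop :=
  ∃ φ : Fin N → V, ∀ f : V,
    volume {t : Fin N → ℝ | (∀ i, t i ∈ Set.Icc (0 : ℝ) 1) ∧ f + ∑ i, t i • φ i ∈ S} = 0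

/-- `S` is a finite dimensionally shy subset of a normed real vector space `V`. -/
def FinDimShy {V : Type*} [NormedAddCommGroup V] [NormedSpace ℝ V] (S : Set V) : Prop :=
  ∃ N : ℕ, 0 < N ∧ NDimShy N S

/-- `S` is a shy subset of `V`: there are a compactly supported Borel probability measure `μ`
on `V` and a Borel set `S̃ ⊇ S` all of whose translates are `μ`-null. -/
def IsShy {V : Type*} [NormedAddCommGroup V] [NormedSpace ℝ V] (S : Set V) : Prop :=
  letI : MeasurableSpace V := borel V
  ∃ μ : Measure V, μ Set.univ = 1 ∧ (∃ K : Set V, IsCompact K ∧ μ K = 1) ∧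
    ∃ St : Set V, MeasurableSet St ∧ S ⊆ St ∧
      ∀ v : V, μ ((fun x => x + v) ⁻¹' St) = 0

/-- `S` is a prevalent subset of `V`. -/
def IsPrevalent {V : Type*} [NormedAddCommGroup V] [NormedSpace ℝ V] (S : Set V) : Prop :=
  IsShy Sᶜ

/-- `F` is the (normalized) lift of an orientation-preserving real analytic expanding circle
map of degree `d` fixing `π(0)`. -/
def AnalyticExpandingLift (F : ℝ → ℝ) (d : ℕ) : Prop :=
  (∀ x : ℝ, AnalyticAt ℝ F x) ∧ (∀ x : ℝ, F (x + 1) = F x + d) ∧ StrictMono F ∧ F 0 = 0 ∧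
    2 ≤ d ∧ ∃ C > (0 : ℝ), ∃ l > (1 : ℝ), ∀ n : ℕ, 1 ≤ n → ∀ x : ℝ, C * l ^ n ≤ |deriv (F^[n]) x|

/-- The inverse branches `τ_{i,n} = τ_{i_n} ∘ ⋯ ∘ τ_{i_1}`, where `τ = F⁻¹` and
`τ_i(x) = τ(x+i)`; the word `i` is indexed from `0`, so `i 0` is the first letter `i_1`. -/
noncomputable def tauIter (F : ℝ → ℝ) {d : ℕ} (i : ℕ → Fin d) : ℕ → ℝ → ℝ
  | 0, x => x
  | n + 1, x => Function.invFun F (tauIter F i n x + ((i n : ℕ) : ℝ))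

/-- The function `h^f_i` associated to an infinite word `i`. -/
noncomputable def hSum (F : ℝ → ℝ) {d : ℕ} (i : ℕ → Fin d) (f : Circle1 → ℝ) : ℝ → ℝ :=
  fun x => ∑' n : ℕ,
    (f ((tauIter F i (n + 1) x : ℝ) : Circle1) - f ((tauIter F i (n + 1) 0 : ℝ) : Circle1))

/-- The function `h^f_i` associated to a finite word of length `m` (the first `m` letters
of `i`). -/
noncomputable def hSumFin (F : ℝ → ℝ) {d : ℕ} (i : ℕ → Fin d) (m : ℕ) (f : Circle1 → ℝ) :
    ℝ → ℝ :=
  fun x => ∑ n ∈ Finset.range m,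
    (f ((tauIter F i (n + 1) x : ℝ) : Circle1) - f ((tauIter F i (n + 1) 0 : ℝ) : Circle1))

/-- `i ∈ CL(x,K)`: all backward images of `x` along the word `i` lie over `K`. -/
def WordIn (F : ℝ → ℝ) {d : ℕ} (i : ℕ → Fin d) (x : ℝ) (K : Set Circle1) : Prop :=
  ∀ n : ℕ, 1 ≤ n → ((tauIter F i n x : ℝ) : Circle1) ∈ K

/-- `x` (a real, lying over `K`) is an `f`-supercritical value of `K`. -/
def IsSupercriticalValue (F : ℝ → ℝ) (d : ℕ) (f : Circle1 → ℝ) (K : Set Circle1) (x : ℝ) :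
    Prop :=
  ((x : ℝ) : Circle1) ∈ K ∧ ∃ i j : ℕ → Fin d, WordIn F i x K ∧ WordIn F j x K ∧ i 0 ≠ j 0 ∧
    deriv (hSum F i f) x = deriv (hSum F j f) x

/-- `x` is a critical value of `T|K`. -/
def IsCriticalValue (T : Circle1 → Circle1) (K : Set Circle1) (x : Circle1) : Prop :=
  x ∈ K ∧ ∃ y z, y ∈ K ∧ z ∈ K ∧ y ≠ z ∧ T y = x ∧ T z = x

/-- A critical value `x` of `T|K` is regular: on each side of `x` there is a continuous
inverse branch of `T` selecting the unique preimage in `K`. -/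
def IsRegularCriticalValue (T : Circle1 → Circle1) (K : Set Circle1) (x : Circle1) : Prop :=
  ∃ U : Set Circle1, U ∈ 𝓝 x ∧ IsConnected U ∧
    ∀ b ∈ U \ {x}, ∃ s : Circle1 → Circle1,
      ContinuousOn s (connectedComponentIn (U \ {x}) b) ∧
      (∀ y ∈ connectedComponentIn (U \ {x}) b, T (s y) = y) ∧
      (∀ y ∈ K ∩ connectedComponentIn (U \ {x}) b, T ⁻¹' {y} ∩ K = {s y})

/-- `T|K` is Sturmian-like: every critical value is regular. -/
def SturmianLike (T : Circle1 → Circle1) (K : Set Circle1) : Prop :=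
  ∀ x, IsCriticalValue T K x → IsRegularCriticalValue T K x

/-- `f : ℝ/ℤ → ℝ` is a trigonometric polynomial. -/
def IsTrigPoly (f : Circle1 → ℝ) : Prop :=
  ∃ m : ℕ, ∃ a b : ℕ → ℝ, ∀ x : ℝ,
    f ↑x = a 0 + ∑ k ∈ Finset.range m,
      (a (k + 1) * Real.cos (2 * Real.pi * (k + 1) * x) +
        b (k + 1) * Real.sin (2 * Real.pi * (k + 1) * x))

end

/-!
Let `g` be a Lipschitz calibrated sub-action. Uniqueness of the maximizing measure makes `g` unique
up to a constant, so `K(f, T) = Λ_{f,T,g}` is a closed subset of `E_{f,T,g}` contained in its own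
image. Iterating the sub-action inequality along the inverse branches of a word
`i ∈ CL(x, K(f, T))` shows that `g - h^f_i` is minimal at `x`. Comparing the words at `x` with
those at nearby points `y`, every limit of words of `y` as `y ↓ x` maximizes `(h^f_i)'(x)` over
`i ∈ CL(x, K(f, T))`, and every limit as `y ↑ x` minimizes it. If `x` is not supercritical, these
limits therefore share their first letter on each side; by compactness of the word space the first
letter of the words of `y` is constant near `x` on each side, and it names the continuous inverse
branch required by regularity.
-/

/-! ### Invariant measures -/

section InvariantMeasure

variable {X : Type*} [MeasurableSpace X]

/-- The empirical measure `n⁻¹ ∑_{k < n} δ_{T^k x}` of the orbit of `x`. -/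
noncomputable def empiricalMeasure (T : X → X) (x : X) (n : ℕ) : Measure X :=
  (n : ENNReal)⁻¹ • ∑ k ∈ Finset.range n, Measure.dirac (T^[k] x)

lemma isProbabilityMeasure_empiricalMeasure (T : X → X) (x : X) {n : ℕ} (hn : n ≠ 0) :
    IsProbabilityMeasure (empiricalMeasure T x n) := by
  constructor
  simp [empiricalMeasure, ENNReal.inv_mul_cancel, hn]

lemma integral_empiricalMeasure [MeasurableSingletonClass X] (T : X → X) (x : X) (n : ℕ)
    (φ : X → ℝ) : ∫ z, φ z ∂(empiricalMeasure T x n) = birkhoffAverage ℝ T φ n x := by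
  rw [empiricalMeasure, integral_smul_measure,
    integral_finsetSum_measure fun k _ => integrable_dirac (by simp)]
  simp [birkhoffAverage, birkhoffSum]

variable [TopologicalSpace X] [BorelSpace X] [TopologicalSpace.MetrizableSpace X] {T : X → X}

lemma measurePreserving_of_integral_comp_eq (hT : Continuous T) {μ : Measure X} [IsFiniteMeasure μ]
    (h : ∀ φ : X → ℝ, Continuous φ → ∫ z, φ (T z) ∂μ = ∫ z, φ z ∂μ) : MeasurePreserving T μ μ := by
  refine ⟨hT.measurable, ext_of_forall_integral_eq_of_IsFiniteMeasure fun φ => ?_⟩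
  rw [integral_map hT.aemeasurable φ.continuous.aestronglyMeasurable, h φ φ.continuous]

variable [CompactSpace X]

/-- The Krylov–Bogoliubov theorem. -/
theorem exists_measurePreserving_isProbabilityMeasure [Nonempty X] (hT : Continuous T) :
    ∃ μ : Measure X, IsProbabilityMeasure μ ∧ MeasurePreserving T μ μ := by
  obtain ⟨x⟩ := ‹Nonempty X›
  let P (n : ℕ) : ProbabilityMeasure X :=
    ⟨empiricalMeasure T x (n + 1), isProbabilityMeasure_empiricalMeasure T x n.succ_ne_zero⟩
  let U : Ultrafilter ℕ := hyperfilter ℕ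
  obtain ⟨μ, -, hμ : Tendsto P U (𝓝 μ)⟩ := isCompact_univ.ultrafilter_le_nhds (U.map P) (by simp)
  have hlim (φ : X → ℝ) (hφ : Continuous φ) :
      Tendsto (fun n => birkhoffAverage ℝ T φ (n + 1) x) U (𝓝 (∫ z, φ z ∂μ)) := by
    simpa only [P, ProbabilityMeasure.coe_mk, BoundedContinuousFunction.mkOfCompact_apply,
      ContinuousMap.coe_mk, integral_empiricalMeasure] using
      ProbabilityMeasure.tendsto_iff_forall_integral_tendsto.1 hμ
        (BoundedContinuousFunction.mkOfCompact ⟨φ, hφ⟩)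
  refine ⟨μ, inferInstance, measurePreserving_of_integral_comp_eq hT fun φ hφ => ?_⟩
  have hshift : Tendsto
      (fun n => birkhoffAverage ℝ T φ (n + 1) (T x) - birkhoffAverage ℝ T φ (n + 1) x) U (𝓝 0) :=
    ((tendsto_birkhoffAverage_apply_sub_birkhoffAverage' ℝ
      (isCompact_range hφ).isBounded T x).comp (tendsto_add_atTop_nat 1)).mono_left
      Nat.hyperfilter_le_atTop
  have hcomp : Tendsto (fun n => birkhoffAverage ℝ T φ (n + 1) (T x)) U
      (𝓝 (∫ z, φ (T z) ∂μ)) := by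
    simpa only [birkhoffAverage, birkhoffSum, ← Function.iterate_succ_apply,
      Function.iterate_succ_apply', Function.comp_apply] using hlim _ (hφ.comp hT)
  exact sub_eq_zero.1 (tendsto_nhds_unique (hcomp.sub (hlim φ hφ)) hshift)

theorem exists_measurePreserving_ae_mem_of_mapsTo (hT : Continuous T) {S : Set X}
    (hS : IsClosed S) (hne : S.Nonempty) (hmaps : MapsTo T S S) :
    ∃ μ : Measure X, IsProbabilityMeasure μ ∧ MeasurePreserving T μ μ ∧ ∀ᵐ z ∂μ, z ∈ S := by
  have := hne.to_subtype
  have := isCompact_iff_compactSpace.1 hS.isCompact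
  obtain ⟨μ, hμ, hμT⟩ := exists_measurePreserving_isProbabilityMeasure (hT.restrict hmaps)
  have hval : Measurable ((↑) : S → X) := measurable_subtype_coe
  refine ⟨μ.map (↑), Measure.isProbabilityMeasure_map hval.aemeasurable, ⟨hT.measurable, ?_⟩, ?_⟩
  · rw [Measure.map_map hT.measurable hval,
      show T ∘ ((↑) : S → X) = (↑) ∘ hmaps.restrict T S S from rfl,
      ← Measure.map_map hval hμT.measurable, hμT.map_eq]
  · exact (ae_map_iff hval.aemeasurable hS.measurableSet).2 (Eventually.of_forall Subtype.prop)

end InvariantMeasure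

/-! ### Forward and backward invariant sets -/

section InvariantSets

variable {X : Type*}

lemma mapsTo_iInter_preimage_iterate (T : X → X) (A : Set X) :
    MapsTo T (⋂ n : ℕ, T^[n] ⁻¹' A) (⋂ n : ℕ, T^[n] ⁻¹' A) := fun x hx =>
  mem_iInter.2 fun n => by
    simpa only [mem_preimage, Function.iterate_succ_apply] using mem_iInter.1 hx (n + 1)

variable [TopologicalSpace X] {T : X → X}

lemma nonempty_iInter_preimage_iterate (hT : Continuous T) {A : Set X} (hA : IsCompact A)
    (hcl : IsClosed A) (hne : A.Nonempty) (hsub : A ⊆ T '' A) :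
    (⋂ n : ℕ, T^[n] ⁻¹' A).Nonempty := by
  let B (n : ℕ) : Set X := ⋂ k ≤ n, T^[k] ⁻¹' A
  have hBcl (n : ℕ) : IsClosed (B n) := isClosed_biInter fun k _ => hcl.preimage (hT.iterate k)
  have hBsub (n : ℕ) : B n ⊆ T^[n] ⁻¹' A := biInter_subset_of_mem (mem_Iic.2 le_rfl)
  have hBne (n : ℕ) (x : X) (hx : x ∈ A) : ∃ y ∈ B n, T^[n] y = x := by
    induction n generalizing x with
    | zero => exact ⟨x, by simpa [B] using hx, rfl⟩
    | succ n ih =>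
      obtain ⟨w, hw, rfl⟩ := hsub hx
      obtain ⟨y, hy, rfl⟩ := ih w hw
      have hlast : T^[n + 1] y ∈ A := by rwa [Function.iterate_succ_apply']
      refine ⟨y, mem_iInter₂.2 fun k hk => ?_, Function.iterate_succ_apply' T n y⟩
      rcases hk.eq_or_lt with rfl | hk
      exacts [hlast, mem_iInter₂.1 hy k (Nat.lt_succ_iff.1 hk)]
  have hB : (⋂ n, B n).Nonempty := by
    refine IsCompact.nonempty_iInter_of_sequence_nonempty_isCompact_isClosed B
      (fun n => biInter_subset_biInter_left fun k hk => Nat.le_succ_of_le hk) (fun n => ?_)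
      (hA.of_isClosed_subset (hBcl 0) (hBsub 0)) hBcl
    obtain ⟨y, hy, -⟩ := hBne n _ hne.some_mem
    exact ⟨y, hy⟩
  exact hB.mono <| iInter_mono hBsub

lemma iInter_image_iterate_subset_image [T2Space X] (hT : Continuous T) {B : Set X}
    (hB : IsCompact B) (hmaps : MapsTo T B B) :
    ⋂ n : ℕ, T^[n] '' B ⊆ T '' ⋂ n : ℕ, T^[n] '' B := by
  intro x hx
  have hcpt (n : ℕ) : IsCompact (T^[n] '' B) := hB.image (hT.iterate n)
  have hcl (n : ℕ) : IsClosed (T ⁻¹' {x} ∩ T^[n] '' B) :=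
    (isClosed_singleton.preimage hT).inter (hcpt n).isClosed
  obtain ⟨w, hw⟩ : (⋂ n, T ⁻¹' {x} ∩ T^[n] '' B).Nonempty := by
    refine IsCompact.nonempty_iInter_of_sequence_nonempty_isCompact_isClosed _
      (fun n => inter_subset_inter_right _ ?_) (fun n => ?_)
      ((hcpt 0).inter_left (isClosed_singleton.preimage hT)) hcl
    · rw [Function.iterate_succ, image_comp]
      exact image_mono hmaps.image_subset
    · obtain ⟨y, hy, hyx⟩ := mem_iInter.1 hx (n + 1)
      exact ⟨T^[n] y, by
        rwa [mem_preimage, mem_singleton_iff, ← Function.iterate_succ_apply' T], y, hy, rfl⟩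
  rw [← inter_iInter] at hw
  exact ⟨w, hw.2, hw.1⟩

end InvariantSets

/-! ### Maximizing measures and calibrated sub-actions -/

section ErgodicOptimization

variable {T : Circle1 → Circle1} {f g g' : Circle1 → ℝ}

lemma isMaximizing_of_ae_mem_eset (hT : Continuous T) (hf : Continuous f) (hg : Continuous g)
    {μ : Measure Circle1} (hμ : InvProb T μ) (hE : ∀ᵐ z ∂μ, z ∈ Eset f T g) :
    IsMaximizing f T μ := by
  have := hμ.1
  have hint {φ : Circle1 → ℝ} (hφ : Continuous φ) : Integrable φ μ :=
    (BoundedContinuousFunction.mkOfCompact ⟨φ, hφ⟩).integrable μ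
  have hinv : ∫ z, g (T z) ∂μ = ∫ z, g z ∂μ := by
    conv_rhs => rw [← hμ.2]
    rw [integral_map hT.aemeasurable hg.aestronglyMeasurable]
  have hcob : ∫ z, g z + f z ∂μ = ∫ z, g (T z) + beta f T ∂μ := integral_congr_ae hE
  rw [integral_add (hint hg) (hint hf),
    integral_add (hint (φ := fun z => g (T z)) (hg.comp hT)) (integrable_const _), hinv] at hcob
  exact ⟨hμ, by simpa using hcob⟩

lemma isClosed_eset (hT : Continuous T) (hf : Continuous f) (hg : Continuous g) :
    IsClosed (Eset f T g) :=
  isClosed_eq (hg.add hf) ((hg.comp hT).add continuous_const)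

/-- Calibrated preimages of a maximum point of `g - g'` are again maximum points of `g - g'`, so
the maximum set carries a whole forward orbit inside `Eset f T g`, hence a maximizing measure. -/
lemma exists_isMaximizing_ae_eq_max (hT : Continuous T) (hf : Continuous f)
    (hg : IsCalibrated f T g) (hg' : IsSubaction f T g') {x₀ : Circle1}
    (hmax : ∀ z, g z - g' z ≤ g x₀ - g' x₀) :
    ∃ μ, IsMaximizing f T μ ∧ ∀ᵐ z ∂μ, g z - g' z = g x₀ - g' x₀ := by
  let M : Set Circle1 := {z | g z - g' z = g x₀ - g' x₀}
  have hback {x : Circle1} (hx : x ∈ M) : ∃ y ∈ M ∩ Eset f T g, T y = x := by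
    obtain ⟨y, rfl, hy⟩ := hg.2 x
    have hx : g (T y) - g' (T y) = g x₀ - g' x₀ := hx
    exact ⟨y, ⟨le_antisymm (hmax y) (by linarith [hg'.2 y]), hy⟩, rfl⟩
  have hcl : IsClosed (M ∩ Eset f T g) :=
    (isClosed_eq (hg.1.1.sub hg'.1) continuous_const).inter (isClosed_eset hT hf hg.1.1)
  obtain ⟨y₀, hy₀, -⟩ := hback (x := x₀) rfl
  obtain ⟨μ, hμ, hμT, hae⟩ := exists_measurePreserving_ae_mem_of_mapsTo hT
    (isClosed_iInter fun n => hcl.preimage (hT.iterate n))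
    (nonempty_iInter_preimage_iterate hT hcl.isCompact hcl ⟨y₀, hy₀⟩ fun x hx => hback hx.1)
    (mapsTo_iInter_preimage_iterate T _)
  have hae : ∀ᵐ z ∂μ, z ∈ M ∩ Eset f T g := hae.mono fun z hz => mem_iInter.1 hz 0
  exact ⟨μ, isMaximizing_of_ae_mem_eset hT hf hg.1.1 ⟨hμ, hμT.map_eq⟩ (hae.mono fun z => And.right),
    hae.mono fun z => And.left⟩

/-- The maximum and the minimum of `g - g'` are both attained almost surely for the maximizing
measure. -/
theorem IsCalibrated.exists_forall_eq_add (hT : Continuous T) (hf : Continuous f)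
    (huniq : {μ | IsMaximizing f T μ}.Subsingleton) (hg : IsCalibrated f T g)
    (hg' : IsCalibrated f T g') : ∃ c, ∀ z, g' z = g z + c := by
  have hcont : Continuous fun z => g z - g' z := hg.1.1.sub hg'.1.1
  obtain ⟨a, -, ha⟩ := isCompact_univ.exists_isMaxOn univ_nonempty hcont.continuousOn
  obtain ⟨b, -, hb⟩ := isCompact_univ.exists_isMinOn univ_nonempty hcont.continuousOn
  simp only [isMaxOn_univ_iff] at ha
  simp only [isMinOn_univ_iff] at hb
  obtain ⟨μ, hμ, hμa⟩ := exists_isMaximizing_ae_eq_max hT hf hg hg'.1 ha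
  obtain ⟨ν, hν, hνb⟩ := exists_isMaximizing_ae_eq_max hT hf hg' hg.1 (x₀ := b)
    fun z => by linarith [hb z]
  obtain rfl : μ = ν := huniq hμ hν
  have := hμ.1.1
  obtain ⟨z, hza, hzb⟩ := (hμa.and hνb).exists
  exact ⟨g' a - g a, fun w => by linarith [ha w, hb w]⟩

end ErgodicOptimization

/-! ### The set `K(f, T)` -/

section Lambda

variable {T : Circle1 → Circle1} {f g : Circle1 → ℝ}

lemma lambdaStar_eq_iInter (f : Circle1 → ℝ) (T : Circle1 → Circle1) (g : Circle1 → ℝ) :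
    LambdaStar f T g = ⋂ n : ℕ, T^[n] ⁻¹' Eset f T g := by
  ext x
  simp [LambdaStar]

lemma lambda_subset_eset (f : Circle1 → ℝ) (T : Circle1 → Circle1) (g : Circle1 → ℝ) :
    Lambda f T g ⊆ Eset f T g := by
  intro x hx
  obtain ⟨y, hy, rfl⟩ := mem_iInter.1 hx 0
  exact hy 0

lemma isCompact_lambdaStar (hT : Continuous T) (hf : Continuous f) (hg : Continuous g) :
    IsCompact (LambdaStar f T g) := by
  rw [lambdaStar_eq_iInter]
  exact (isClosed_iInter fun n => (isClosed_eset hT hf hg).preimage (hT.iterate n)).isCompact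

lemma isClosed_lambda (hT : Continuous T) (hf : Continuous f) (hg : Continuous g) :
    IsClosed (Lambda f T g) :=
  isClosed_iInter fun n => ((isCompact_lambdaStar hT hf hg).image (hT.iterate n)).isClosed

lemma lambda_subset_image (hT : Continuous T) (hf : Continuous f) (hg : Continuous g) :
    Lambda f T g ⊆ T '' Lambda f T g :=
  iInter_image_iterate_subset_image hT (isCompact_lambdaStar hT hf hg) <|
    lambdaStar_eq_iInter f T g ▸ mapsTo_iInter_preimage_iterate T _

theorem kset_eq_lambda (hT : Continuous T) (hf : Continuous f)
    (huniq : {μ | IsMaximizing f T μ}.Subsingleton) (hg : g ∈ Gset f T) :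
    Kset f T = Lambda f T g := by
  refine (iUnion₂_subset fun g' hg' => ?_).antisymm
    (subset_biUnion_of_mem (u := fun g => Lambda f T g) hg)
  obtain ⟨c, hc⟩ := hg.2.exists_forall_eq_add hT hf huniq hg'.2
  have hE : Eset f T g' = Eset f T g := by
    ext x
    simp only [Eset, mem_ofPred_eq, hc]
    constructor <;> intro h <;> linarith
  simp only [Lambda, LambdaStar, hE, subset_rfl]

end Lambda

/-! ### Lifts of circle maps and their inverse branches -/

lemma circle_coe_eq_coe_iff {a b : ℝ} : (a : Circle1) = (b : Circle1) ↔ ∃ k : ℤ, a + k = b := by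
  rw [eq_comm, ← sub_eq_zero, ← AddCircle.coe_sub, AddCircle.coe_eq_zero_iff]
  simp [eq_sub_iff_add_eq, add_comm]

section Lift

variable {F : ℝ → ℝ} {e : ℤ}

lemma lift_add_intCast (he : ∀ x, F (x + 1) = F x + e) (x : ℝ) (k : ℤ) :
    F (x + k) = F x + e * k := by
  simpa [mul_comm] using AddConstMapClass.map_add_int' (⟨F, he⟩ : AddConstMap ℝ ℝ 1 (e : ℝ)) x k

lemma cmap_coe (he : ∀ x, F (x + 1) = F x + e) (x : ℝ) :
    cmap F (x : Circle1) = (F x : Circle1) := by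
  obtain ⟨k, hk⟩ : ∃ k : ℤ, rep (x : Circle1) + k = x :=
    circle_coe_eq_coe_iff.1 ((AddCircle.equivIco (1 : ℝ) 0).symm_apply_apply (x : Circle1))
  refine circle_coe_eq_coe_iff.2 ⟨e * k, ?_⟩
  rw [← congrArg F hk, lift_add_intCast he]
  push_cast
  rfl

lemma lift_iterate_add_one (he : ∀ x, F (x + 1) = F x + e) (n : ℕ) (x : ℝ) :
    F^[n] (x + 1) = F^[n] x + (e ^ n : ℤ) := by
  induction n generalizing x with
  | zero => simp
  | succ n ih =>
    rw [Function.iterate_succ_apply, Function.iterate_succ_apply, he, lift_add_intCast ih, pow_succ]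
    push_cast
    rfl

lemma continuous_cmap (hF : Continuous F) (he : ∀ x, F (x + 1) = F x + e) :
    Continuous (cmap F) := by
  refine (QuotientAddGroup.isQuotientMap_mk _).continuous_iff.2 ?_
  exact ((AddCircle.continuous_mk' 1).comp hF).congr fun x => (cmap_coe he x).symm

lemma lift_surjective (hF : Continuous F) (he : ∀ x, F (x + 1) = F x + e) (he0 : e ≠ 0) :
    Function.Surjective F := by
  intro y
  obtain ⟨n, hn⟩ := exists_nat_ge |y - F 0|
  have hval (k : ℤ) : F (e * k) = F 0 + e ^ 2 * k := by
    have := lift_add_intCast he 0 (e * k)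
    push_cast at this
    rw [zero_add] at this
    rw [this]
    ring
  have he1 : (1 : ℝ) ≤ (e : ℝ) ^ 2 := by
    exact_mod_cast (sq_pos_of_ne_zero he0 : 0 < e ^ 2)
  have hen : (n : ℝ) ≤ e ^ 2 * n := le_mul_of_one_le_left n.cast_nonneg he1
  obtain ⟨h₁, h₂⟩ := abs_le.1 hn
  refine mem_range_of_exists_le_of_exists_ge hF ⟨_, (hval (-n)).trans_le ?_⟩
    ⟨_, le_of_le_of_eq ?_ (hval n).symm⟩ <;> push_cast <;> linarith

lemma lift_degree_ne_zero (hinj : Function.Injective F) (he : ∀ x, F (x + 1) = F x + e) :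
    e ≠ 0 := by
  rintro rfl
  simpa using hinj ((he 0).trans (by simp) : F (0 + 1) = F 0)

/-- The letter is the residue mod `e` of the integer by which the lifts of `w` miss `x`. -/
lemma exists_letter (hinj : Function.Injective F) (he : ∀ x, F (x + 1) = F x + e) {w : Circle1}
    {x : ℝ} (hw : cmap F w = x) :
    ∃ a : Fin e.natAbs, ((Function.invFun F (x + (a : ℕ)) : ℝ) : Circle1) = w := by
  obtain ⟨v, rfl⟩ := QuotientAddGroup.mk_surjective w
  have he0 : e ≠ 0 := lift_degree_ne_zero hinj he
  obtain ⟨k, hk⟩ := circle_coe_eq_coe_iff.1 ((cmap_coe he v).symm.trans hw)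
  have hr0 : 0 ≤ -k % e := Int.emod_nonneg _ he0
  have hr1 : -k % e < e.natAbs := Int.emod_lt _ he0
  refine ⟨⟨(-k % e).toNat, by omega⟩, ?_⟩
  have hr : (((-k % e).toNat : ℕ) : ℝ) = -k - e * ((-k / e : ℤ) : ℝ) := by
    have hdiv := Int.mul_ediv_add_emod (-k) e
    have : (((-k % e).toNat : ℕ) : ℤ) = -k - e * (-k / e) := by omega
    exact_mod_cast this
  have hFv : F (v + (-(-k / e) : ℤ)) = x + ((-k % e).toNat : ℕ) := by
    rw [lift_add_intCast he, hr, ← hk]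
    push_cast
    ring
  rw [← hFv, Function.leftInverse_invFun hinj]
  exact circle_coe_eq_coe_iff.2 ⟨-k / e, by push_cast; ring⟩

end Lift

namespace ExpandingLift

variable {F : ℝ → ℝ} {d : ℕ}

lemma differentiable (hF : ExpandingLift 1 F) : Differentiable ℝ F :=
  hF.1.differentiable one_ne_zero

lemma continuous_deriv (hF : ExpandingLift 1 F) : Continuous (deriv F) :=
  hF.1.continuous_deriv le_rfl

lemma deriv_ne_zero (hF : ExpandingLift 1 F) (x : ℝ) : deriv F x ≠ 0 := by
  obtain ⟨-, -, C, hC, l, hl, h⟩ := hF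
  exact abs_pos.1 ((show 0 < C * l ^ 1 by positivity).trans_le (by simpa using h 1 le_rfl x))

lemma injective (hF : ExpandingLift 1 F) : Function.Injective F := by
  refine .of_lt_imp_ne fun x y hxy h => ?_
  obtain ⟨c, -, hc⟩ := exists_deriv_eq_zero hxy hF.1.continuous.continuousOn h
  exact hF.deriv_ne_zero c hc

lemma bijective (hF : ExpandingLift 1 F) : Function.Bijective F := by
  obtain ⟨e, he⟩ := hF.2.1
  exact ⟨hF.injective,
    lift_surjective hF.1.continuous he (lift_degree_ne_zero hF.injective he)⟩

lemma apply_invFun (hF : ExpandingLift 1 F) (y : ℝ) : F (Function.invFun F y) = y :=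
  Function.rightInverse_invFun hF.bijective.surjective y

lemma continuous_invFun (hF : ExpandingLift 1 F) : Continuous (Function.invFun F) := by
  have hopen : IsOpenMap F := isOpenMap_of_hasStrictDerivAt
    (fun x => hF.1.contDiffAt.hasStrictDerivAt one_ne_zero) hF.deriv_ne_zero
  refine continuous_def.2 fun U hU => ?_
  rw [← image_eq_preimage_of_inverse (Function.leftInverse_invFun hF.injective)
    (Function.rightInverse_invFun hF.bijective.surjective)]
  exact hopen U hU

lemma hasDerivAt_invFun (hF : ExpandingLift 1 F) (y : ℝ) :
    HasDerivAt (Function.invFun F) (deriv F (Function.invFun F y))⁻¹ y :=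
  HasDerivAt.of_local_left_inverse hF.continuous_invFun.continuousAt
    (hF.differentiable _).hasDerivAt (hF.deriv_ne_zero _) (Eventually.of_forall hF.apply_invFun)

lemma apply_tauIter_succ (hF : ExpandingLift 1 F) (i : ℕ → Fin d) (n : ℕ) (x : ℝ) :
    F (tauIter F i (n + 1) x) = tauIter F i n x + (i n : ℕ) :=
  hF.apply_invFun _

lemma cmap_tauIter_succ (hF : ExpandingLift 1 F) (i : ℕ → Fin d) (n : ℕ) (x : ℝ) :
    cmap F (tauIter F i (n + 1) x : ℝ) = (tauIter F i n x : Circle1) := by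
  obtain ⟨e, he⟩ := hF.2.1
  rw [cmap_coe he, hF.apply_tauIter_succ]
  exact circle_coe_eq_coe_iff.2 ⟨-(i n : ℕ), by push_cast; ring⟩

lemma exists_iterate_tauIter (hF : ExpandingLift 1 F) (i : ℕ → Fin d) (n : ℕ) :
    ∃ m : ℤ, ∀ x, F^[n] (tauIter F i n x) = x + m := by
  obtain ⟨e, he⟩ := hF.2.1
  induction n with
  | zero => exact ⟨0, fun x => by simp [tauIter]⟩
  | succ n ih =>
    obtain ⟨m, hm⟩ := ih
    refine ⟨m + e ^ n * (i n : ℕ), fun x => ?_⟩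
    rw [Function.iterate_succ_apply, hF.apply_tauIter_succ, ← Int.cast_natCast (R := ℝ),
      lift_add_intCast (lift_iterate_add_one he n), hm]
    push_cast
    ring

end ExpandingLift

/-! ### Derivatives of the inverse branches and of `h^f_i` -/

/-- The derivative of the inverse branch `τ_{i,n}` at `x`, by the chain rule. -/
noncomputable def tauIterDeriv (F : ℝ → ℝ) {d : ℕ} (i : ℕ → Fin d) : ℕ → ℝ → ℝ
  | 0, _ => 1
  | n + 1, x => (deriv F (tauIter F i (n + 1) x))⁻¹ * tauIterDeriv F i n x

/-- The derivative of `h^f_i` at `x`, as the termwise differentiated series. -/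
noncomputable def hSumDeriv (F : ℝ → ℝ) {d : ℕ} (i : ℕ → Fin d) (f : Circle1 → ℝ) (x : ℝ) : ℝ :=
  ∑' n : ℕ, deriv (fun t : ℝ => f t) (tauIter F i (n + 1) x) * tauIterDeriv F i (n + 1) x

lemma Circle1.periodic_deriv (f : Circle1 → ℝ) :
    Function.Periodic (deriv fun t : ℝ => f t) 1 := fun x => by
  simp_rw [← deriv_comp_add_const, AddCircle.coe_add_period]

lemma tendsto_sub_of_uniformContinuous {ι α β : Type*} [UniformSpace α] [AddGroup α]
    [IsUniformAddGroup α] [UniformSpace β] [AddGroup β] [IsUniformAddGroup β] {φ : α → β}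
    (hφ : UniformContinuous φ) {u v : ι → α} {l : Filter ι}
    (h : Tendsto (fun n => u n - v n) l (𝓝 0)) : Tendsto (fun n => φ (u n) - φ (v n)) l (𝓝 0) := by
  have hpair : Tendsto (fun n => (v n, u n)) l (uniformity α) := by
    rwa [uniformity_eq_comap_nhds_zero, tendsto_comap_iff]
  have hφpair := Tendsto.comp hφ hpair
  rwa [uniformity_eq_comap_nhds_zero, tendsto_comap_iff] at hφpair

namespace ExpandingLift

variable {F : ℝ → ℝ} {d : ℕ} {f g : Circle1 → ℝ} {i : ℕ → Fin d} {x : ℝ}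

lemma hasDerivAt_tauIter (hF : ExpandingLift 1 F) (i : ℕ → Fin d) (n : ℕ) (x : ℝ) :
    HasDerivAt (tauIter F i n) (tauIterDeriv F i n x) x := by
  induction n with
  | zero => exact hasDerivAt_id x
  | succ n ih => exact (hF.hasDerivAt_invFun _).comp x (ih.add_const ((i n : ℕ) : ℝ))

lemma deriv_iterate_mul_tauIterDeriv (hF : ExpandingLift 1 F) (i : ℕ → Fin d) (n : ℕ) (x : ℝ) :
    deriv F^[n] (tauIter F i n x) * tauIterDeriv F i n x = 1 := by
  obtain ⟨m, hm⟩ := hF.exists_iterate_tauIter i n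
  have hcomp := ((hF.differentiable.iterate n) _).hasDerivAt.comp x (hF.hasDerivAt_tauIter i n x)
  refine hcomp.unique (((hasDerivAt_id x).add_const (m : ℝ)).congr_of_eventuallyEq ?_)
  exact Eventually.of_forall hm

lemma exists_abs_tauIterDeriv_le (hF : ExpandingLift 1 F) :
    ∃ B r : ℝ, 0 < r ∧ r < 1 ∧ ∀ {d : ℕ} (i : ℕ → Fin d) (n : ℕ) (x : ℝ),
      |tauIterDeriv F i (n + 1) x| ≤ B * r ^ (n + 1) := by
  obtain ⟨C, hC, l, hl, h⟩ := hF.2.2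
  refine ⟨C⁻¹, l⁻¹, by positivity, inv_lt_one_of_one_lt₀ hl, fun i n x => ?_⟩
  have hone := congrArg abs (hF.deriv_iterate_mul_tauIterDeriv i (n + 1) x)
  rw [abs_mul, abs_one] at hone
  rw [inv_pow, ← mul_inv, ← one_div, le_div_iff₀' (by positivity), ← hone]
  gcongr
  exact h (n + 1) n.succ_pos _

lemma tendsto_tauIter_sub (hF : ExpandingLift 1 F) (i : ℕ → Fin d) (x y : ℝ) :
    Tendsto (fun n => tauIter F i n y - tauIter F i n x) atTop (𝓝 0) := by
  obtain ⟨B, r, hr0, hr1, h⟩ := hF.exists_abs_tauIterDeriv_le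
  rw [← tendsto_add_atTop_iff_nat 1]
  have hlim : Tendsto (fun n : ℕ => B * r ^ (n + 1) * ‖y - x‖) atTop (𝓝 0) := by
    simpa using (((tendsto_pow_atTop_nhds_zero_of_lt_one hr0.le hr1).comp
      (tendsto_add_atTop_nat 1)).const_mul B).mul_const ‖y - x‖
  refine squeeze_zero_norm (fun n => ?_) hlim
  exact convex_univ.norm_image_sub_le_of_norm_hasDerivWithin_le
    (fun z _ => (hF.hasDerivAt_tauIter i (n + 1) z).hasDerivWithinAt)
    (fun z _ => h i n z) (mem_univ x) (mem_univ y)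

lemma continuous_tauIter (hF : ExpandingLift 1 F) (n : ℕ) :
    Continuous fun p : (ℕ → Fin d) × ℝ => tauIter F p.1 n p.2 := by
  induction n with
  | zero => exact continuous_snd
  | succ n ih =>
    exact hF.continuous_invFun.comp <| ih.add <|
      (continuous_of_discreteTopology (f := fun a : Fin d => ((a : ℕ) : ℝ))).comp
        ((continuous_apply n).comp continuous_fst)

lemma continuous_tauIterDeriv (hF : ExpandingLift 1 F) (n : ℕ) :
    Continuous fun p : (ℕ → Fin d) × ℝ => tauIterDeriv F p.1 n p.2 := by
  induction n with
  | zero => exact continuous_const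
  | succ n ih =>
    exact ((hF.continuous_deriv.comp (hF.continuous_tauIter (n + 1))).inv₀
      fun _ => hF.deriv_ne_zero _).mul ih

lemma exists_summable_norm_le (hF : ExpandingLift 1 F) (hf : ContDiff ℝ 1 fun x : ℝ => f x) :
    ∃ u : ℕ → ℝ, Summable u ∧ ∀ {d : ℕ} (n : ℕ) (i : ℕ → Fin d) (x : ℝ),
      ‖deriv (fun t : ℝ => f t) (tauIter F i (n + 1) x) * tauIterDeriv F i (n + 1) x‖ ≤ u n := by
  obtain ⟨B, r, hr0, hr1, h⟩ := hF.exists_abs_tauIterDeriv_le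
  obtain ⟨M, hM⟩ := ((Circle1.periodic_deriv f).isBounded_of_continuous one_ne_zero
    (hf.continuous_deriv le_rfl)).exists_norm_le
  have hgeom := (summable_nat_add_iff 1).2 (summable_geometric_of_lt_one hr0.le hr1)
  refine ⟨fun n => M * (B * r ^ (n + 1)), (hgeom.mul_left B).mul_left M, fun n i x => ?_⟩
  rw [norm_mul]
  have hM0 : 0 ≤ M := (norm_nonneg _).trans (hM _ (mem_range_self 0))
  exact mul_le_mul (hM _ (mem_range_self _)) (h i n x) (abs_nonneg _) hM0

lemma hasDerivAt_hSum_term (hF : ExpandingLift 1 F) (hf : ContDiff ℝ 1 fun x : ℝ => f x)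
    (i : ℕ → Fin d) (n : ℕ) (x : ℝ) :
    HasDerivAt (fun x : ℝ => f (tauIter F i n x : ℝ) - f (tauIter F i n 0 : ℝ))
      (deriv (fun t : ℝ => f t) (tauIter F i n x) * tauIterDeriv F i n x) x :=
  (((hf.differentiable one_ne_zero) _).hasDerivAt.comp x (hF.hasDerivAt_tauIter i n x)).sub_const _

lemma summable_hSum (hF : ExpandingLift 1 F) (hf : ContDiff ℝ 1 fun x : ℝ => f x)
    (i : ℕ → Fin d) (x : ℝ) :
    Summable fun n => f (tauIter F i (n + 1) x : ℝ) - f (tauIter F i (n + 1) 0 : ℝ) := by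
  obtain ⟨u, hu, hb⟩ := hF.exists_summable_norm_le hf
  exact summable_of_summable_hasDerivAt hu (fun n y => hF.hasDerivAt_hSum_term hf i (n + 1) y)
    (fun n y => hb n i y) (y₀ := 0) (by simp) x

lemma hasDerivAt_hSum (hF : ExpandingLift 1 F) (hf : ContDiff ℝ 1 fun x : ℝ => f x)
    (i : ℕ → Fin d) (x : ℝ) : HasDerivAt (hSum F i f) (hSumDeriv F i f x) x := by
  obtain ⟨u, hu, hb⟩ := hF.exists_summable_norm_le hf
  exact hasDerivAt_tsum hu (fun n y => hF.hasDerivAt_hSum_term hf i (n + 1) y)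
    (fun n y => hb n i y) (y₀ := 0) (by simp) x

lemma continuous_hSumDeriv (hF : ExpandingLift 1 F) (hf : ContDiff ℝ 1 fun x : ℝ => f x) :
    Continuous fun p : (ℕ → Fin d) × ℝ => hSumDeriv F p.1 f p.2 := by
  obtain ⟨u, hu, hb⟩ := hF.exists_summable_norm_le hf
  refine continuous_tsum (fun n => ?_) hu fun n p => hb n p.1 p.2
  exact ((hf.continuous_deriv le_rfl).comp (hF.continuous_tauIter (n + 1))).mul
    (hF.continuous_tauIterDeriv (n + 1))

/-- The sub-action inequality at `τ_{i,k} y`, minus its equality case at `τ_{i,k} x`, summed over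
`1 ≤ k ≤ n`. -/
lemma sum_add_sub_le (hF : ExpandingLift 1 F) (hg : IsSubaction f (cmap F) g)
    (hi : WordIn F i x (Eset f (cmap F) g)) (y : ℝ) (n : ℕ) :
    ∑ k ∈ Finset.range n, (f (tauIter F i (k + 1) y : ℝ) - f (tauIter F i (k + 1) x : ℝ)) +
      (g (tauIter F i n y : ℝ) - g (tauIter F i n x : ℝ)) ≤ g y - g x := by
  induction n with
  | zero => simp [tauIter]
  | succ n ih =>
    have hle := hg.2 (tauIter F i (n + 1) y : ℝ)
    have heq : _ = _ := hi (n + 1) n.succ_pos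
    rw [hF.cmap_tauIter_succ] at hle heq
    rw [Finset.sum_range_succ]
    linarith

lemma hSum_sub_le (hF : ExpandingLift 1 F) (hf : ContDiff ℝ 1 fun x : ℝ => f x)
    (hg : IsSubaction f (cmap F) g) (hi : WordIn F i x (Eset f (cmap F) g)) (y : ℝ) :
    hSum F i f y - hSum F i f x ≤ g y - g x := by
  have hsum : HasSum (fun k => f (tauIter F i (k + 1) y : ℝ) - f (tauIter F i (k + 1) x : ℝ))
      (hSum F i f y - hSum F i f x) :=
    ((hF.summable_hSum hf i y).hasSum.sub (hF.summable_hSum hf i x).hasSum).congr_fun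
      fun k => by ring
  have hcoe : Tendsto (fun n => (tauIter F i n y : Circle1) - (tauIter F i n x : Circle1)) atTop
      (𝓝 0) :=
    ((AddCircle.continuous_mk' 1).tendsto' 0 0 rfl).comp (hF.tendsto_tauIter_sub i x y)
  have hg0 : Tendsto (fun n => g (tauIter F i n y : ℝ) - g (tauIter F i n x : ℝ)) atTop
      (𝓝 0) :=
    tendsto_sub_of_uniformContinuous (CompactSpace.uniformContinuous_of_continuous hg.1) hcoe
  simpa using le_of_tendsto' (hsum.tendsto_sum_nat.add hg0) (hF.sum_add_sub_le hg hi y)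

end ExpandingLift

/-! ### One-sided limits of backward words -/

section Slope

lemma exists_mem_uIcc_slope_eq {h h' : ℝ → ℝ} (hh : ∀ t, HasDerivAt h (h' t) t) {x y : ℝ}
    (hxy : x ≠ y) : ∃ c ∈ uIcc x y, slope h x y = h' c := by
  wlog hlt : x < y generalizing x y
  · rw [uIcc_comm, slope_comm]
    exact this hxy.symm (hxy.symm.lt_of_le (not_lt.1 hlt))
  obtain ⟨c, hc, hslope⟩ := exists_hasDerivAt_eq_slope h h' hlt
    (fun t _ => (hh t).continuousAt.continuousWithinAt) fun t _ => hh t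
  exact ⟨c, Ioo_subset_Icc_self.trans Icc_subset_uIcc hc, by rw [hslope, slope_def_field]⟩

lemma tendsto_slope_of_continuousAt_deriv {ι : Type*} [TopologicalSpace ι] {h h' : ι → ℝ → ℝ}
    (hh : ∀ i t, HasDerivAt (h i) (h' i t) t) {i : ι} {x : ℝ}
    (hcont : ContinuousAt (fun p : ι × ℝ => h' p.1 p.2) (i, x)) :
    Tendsto (fun p : ι × ℝ => slope (h p.1) x p.2) (𝓝 i ×ˢ 𝓝[≠] x) (𝓝 (h' i x)) := by
  refine tendsto_def.2 fun S hS => ?_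
  have hmem : ∀ᶠ p in 𝓝 i ×ˢ 𝓝 x, h' p.1 p.2 ∈ S := nhds_prod_eq (x := i) (y := x) ▸ hcont hS
  obtain ⟨P, hP, Q, hQ, hPQ⟩ := eventually_prod_iff.1 hmem
  obtain ⟨ε, hε, hball⟩ := Metric.eventually_nhds_iff_ball.1 hQ
  have hnear : ∀ᶠ y in 𝓝[≠] x, y ∈ Metric.ball x ε ∧ y ≠ x :=
    (eventually_nhdsWithin_of_eventually_nhds (Metric.ball_mem_nhds x hε)).and
      self_mem_nhdsWithin
  filter_upwards [hP.prod_mk hnear] with ⟨j, y⟩ ⟨hj, hy, hyx⟩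
  obtain ⟨c, hc, hslope⟩ := exists_mem_uIcc_slope_eq (hh j) hyx.symm
  rw [mem_preimage, hslope]
  exact hPQ hj <| hball c <|
    (convex_ball x ε).ordConnected.uIcc_subset (Metric.mem_ball_self hε) hy hc

end Slope

lemma exists_frequently_nhds_prod_of_isCompact {ι Y : Type*} [TopologicalSpace ι] {C : Set ι}
    (hC : IsCompact C) {l : Filter Y} {p : ι → Y → Prop} (h : ∃ᶠ y in l, ∃ i ∈ C, p i y) :
    ∃ i ∈ C, ∃ᶠ q in 𝓝 i ×ˢ l, p q.1 q.2 := by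
  contrapose! h
  have hnhds : {q : ι × Y | ¬ p q.1 q.2} ∈ 𝓝ˢ C ×ˢ l :=
    hC.mem_nhdsSet_prod_of_forall h
  obtain ⟨P, hP, Q, hQ, hPQ⟩ := eventually_prod_iff.1 hnhds
  exact hQ.mono fun y hy i hi => hPQ (subset_of_mem_nhdsSet hP hi) hy

/-- `i` is a cluster point of the words `w ∈ CL(y, K)` as `y` follows the filter `l`. -/
def IsLimitWord (F : ℝ → ℝ) {d : ℕ} (K : Set Circle1) (l : Filter ℝ) (i : ℕ → Fin d) : Prop :=
  ∃ᶠ p : (ℕ → Fin d) × ℝ in 𝓝 i ×ˢ l, WordIn F p.1 p.2 K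

section LimitWord

variable {F : ℝ → ℝ} {d : ℕ} {K : Set Circle1} {l : Filter ℝ} {i j : ℕ → Fin d} {x y : ℝ}
  {f g : Circle1 → ℝ}

lemma WordIn.mono {K' : Set Circle1} (hi : WordIn F i x K) (hKK' : K ⊆ K') : WordIn F i x K' :=
  fun n hn => hKK' (hi n hn)

lemma IsLimitWord.mono {K' : Set Circle1} (hi : IsLimitWord F K l i) (hKK' : K ⊆ K') :
    IsLimitWord F K' l i :=
  Frequently.mono hi fun _ hp => hp.mono hKK'

lemma exists_isLimitWord {P : Set (Fin d)}
    (h : ∃ᶠ y in l, ∃ w : ℕ → Fin d, WordIn F w y K ∧ w 0 ∈ P) :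
    ∃ i : ℕ → Fin d, IsLimitWord F K l i ∧ i 0 ∈ P := by
  have hC : IsCompact {w : ℕ → Fin d | w 0 ∈ P} :=
    ((isClosed_discrete P).preimage (continuous_apply 0)).isCompact
  obtain ⟨i, hi, hlim⟩ := exists_frequently_nhds_prod_of_isCompact hC
    (p := fun w y => WordIn F w y K) (h.mono fun y ⟨w, hw, hwP⟩ => ⟨w, hwP, hw⟩)
  exact ⟨i, hlim, hi⟩

lemma exists_letter_eventually [NeZero d]
    (h : ∀ i j : ℕ → Fin d, IsLimitWord F K l i → IsLimitWord F K l j → i 0 = j 0) :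
    ∃ a : Fin d, ∀ᶠ y in l, ∀ i : ℕ → Fin d, WordIn F i y K → i 0 = a := by
  by_contra! hcon
  have hlim (a : Fin d) : ∃ i : ℕ → Fin d, IsLimitWord F K l i ∧ i 0 ∈ ({a}ᶜ : Set (Fin d)) :=
    exists_isLimitWord (hcon a)
  obtain ⟨i, hi, -⟩ := hlim 0
  obtain ⟨j, hj, hji⟩ := hlim (i 0)
  exact hji (h j i hj hi)

namespace ExpandingLift

lemma isClosed_wordIn (hF : ExpandingLift 1 F) (hK : IsClosed K) :
    IsClosed {p : (ℕ → Fin d) × ℝ | WordIn F p.1 p.2 K} := by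
  simp only [WordIn, ofPred_forall]
  exact isClosed_iInter fun n => isClosed_iInter fun _ =>
    hK.preimage ((AddCircle.continuous_mk' 1).comp (hF.continuous_tauIter n))

lemma wordIn_of_isLimitWord (hF : ExpandingLift 1 F) (hK : IsClosed K) (hl : l ≤ 𝓝 x)
    (hi : IsLimitWord F K l i) : WordIn F i x K := by
  have hfreq : ∃ᶠ p in 𝓝 (i, x), WordIn F p.1 p.2 K := by
    rw [nhds_prod_eq]
    exact hi.filter_mono (prod_mono le_rfl hl)
  exact (hF.isClosed_wordIn hK).mem_of_frequently_of_tendsto hfreq tendsto_id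

lemma tendsto_slope_hSum (hF : ExpandingLift 1 F) (hf : ContDiff ℝ 1 fun x : ℝ => f x)
    (i : ℕ → Fin d) (hl : l ≤ 𝓝[≠] x) :
    Tendsto (fun p : (ℕ → Fin d) × ℝ => slope (hSum F p.1 f) x p.2) (𝓝 i ×ˢ l)
      (𝓝 (hSumDeriv F i f x)) :=
  (tendsto_slope_of_continuousAt_deriv (h' := fun i => hSumDeriv F i f) (hF.hasDerivAt_hSum hf)
    (hF.continuous_hSumDeriv hf).continuousAt).mono_left (prod_mono le_rfl hl)

lemma tendsto_slope_hSum_snd (hF : ExpandingLift 1 F) (hf : ContDiff ℝ 1 fun x : ℝ => f x)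
    {ι : Type*} {m : Filter ι} (j : ℕ → Fin d) (hl : l ≤ 𝓝[≠] x) :
    Tendsto (fun p : ι × ℝ => slope (hSum F j f) x p.2) (m ×ˢ l) (𝓝 (hSumDeriv F j f x)) :=
  ((hasDerivAt_iff_tendsto_slope.1 (hF.hasDerivAt_hSum hf j x)).mono_left hl).comp tendsto_snd

/-- `g - h^f_j` is minimal at `x` and `g - h^f_i` is minimal at `y`. -/
lemma hSum_sub_le_hSum_sub (hF : ExpandingLift 1 F) (hf : ContDiff ℝ 1 fun x : ℝ => f x)
    (hg : IsSubaction f (cmap F) g) (hi : WordIn F i y (Eset f (cmap F) g))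
    (hj : WordIn F j x (Eset f (cmap F) g)) :
    hSum F j f y - hSum F j f x ≤ hSum F i f y - hSum F i f x := by
  linarith [hF.hSum_sub_le hf hg hi x, hF.hSum_sub_le hf hg hj y]

lemma hSumDeriv_le_of_isLimitWord_nhdsGT (hF : ExpandingLift 1 F)
    (hf : ContDiff ℝ 1 fun x : ℝ => f x) (hg : IsSubaction f (cmap F) g)
    (hi : IsLimitWord F (Eset f (cmap F) g) (𝓝[>] x) i)
    (hj : WordIn F j x (Eset f (cmap F) g)) : hSumDeriv F j f x ≤ hSumDeriv F i f x := by
  refine le_of_tendsto_of_tendsto_of_frequently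
    (hF.tendsto_slope_hSum_snd hf j (nhdsGT_le_nhdsNE x))
    (hF.tendsto_slope_hSum hf i (nhdsGT_le_nhdsNE x)) ?_
  have hgt : ∀ᶠ p : (ℕ → Fin d) × ℝ in 𝓝 i ×ˢ 𝓝[>] x, x < p.2 :=
    tendsto_snd.eventually self_mem_nhdsWithin
  refine (hi.and_eventually hgt).mono fun p ⟨hp, hxp⟩ => ?_
  rw [slope_def_field, slope_def_field]
  exact div_le_div_of_nonneg_right (hF.hSum_sub_le_hSum_sub hf hg hp hj) (sub_pos.2 hxp).le

lemma le_hSumDeriv_of_isLimitWord_nhdsLT (hF : ExpandingLift 1 F)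
    (hf : ContDiff ℝ 1 fun x : ℝ => f x) (hg : IsSubaction f (cmap F) g)
    (hi : IsLimitWord F (Eset f (cmap F) g) (𝓝[<] x) i)
    (hj : WordIn F j x (Eset f (cmap F) g)) : hSumDeriv F i f x ≤ hSumDeriv F j f x := by
  refine le_of_tendsto_of_tendsto_of_frequently
    (hF.tendsto_slope_hSum hf i (nhdsLT_le_nhdsNE x))
    (hF.tendsto_slope_hSum_snd hf j (nhdsLT_le_nhdsNE x)) ?_
  have hlt : ∀ᶠ p : (ℕ → Fin d) × ℝ in 𝓝 i ×ˢ 𝓝[<] x, p.2 < x :=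
    tendsto_snd.eventually self_mem_nhdsWithin
  refine (hi.and_eventually hlt).mono fun p ⟨hp, hpx⟩ => ?_
  rw [slope_def_field, slope_def_field]
  exact div_le_div_of_nonpos_of_le (sub_neg.2 hpx).le (hF.hSum_sub_le_hSum_sub hf hg hp hj)

lemma letter_zero_eq_of_not_isSupercriticalValue (hF : ExpandingLift 1 F)
    (hf : ContDiff ℝ 1 fun x : ℝ => f x) (hxK : (x : Circle1) ∈ K)
    (hx : ¬ IsSupercriticalValue F d f K x) (hi : WordIn F i x K) (hj : WordIn F j x K)
    (hij : hSumDeriv F i f x = hSumDeriv F j f x) : i 0 = j 0 := by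
  by_contra hne
  refine hx ⟨hxK, i, j, hi, hj, hne, ?_⟩
  rw [(hF.hasDerivAt_hSum hf i x).deriv, (hF.hasDerivAt_hSum hf j x).deriv, hij]

lemma exists_letter_eventually_nhdsGT [NeZero d] (hF : ExpandingLift 1 F)
    (hf : ContDiff ℝ 1 fun x : ℝ => f x) (hg : IsSubaction f (cmap F) g) (hK : IsClosed K)
    (hKE : K ⊆ Eset f (cmap F) g) (hxK : (x : Circle1) ∈ K)
    (hx : ¬ IsSupercriticalValue F d f K x) :
    ∃ a : Fin d, ∀ᶠ y in 𝓝[>] x, ∀ i : ℕ → Fin d, WordIn F i y K → i 0 = a := by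
  refine exists_letter_eventually fun i j hi hj => ?_
  have hwi := hF.wordIn_of_isLimitWord hK nhdsWithin_le_nhds hi
  have hwj := hF.wordIn_of_isLimitWord hK nhdsWithin_le_nhds hj
  exact hF.letter_zero_eq_of_not_isSupercriticalValue hf hxK hx hwi hwj <| le_antisymm
    (hF.hSumDeriv_le_of_isLimitWord_nhdsGT hf hg (hj.mono hKE) (hwi.mono hKE))
    (hF.hSumDeriv_le_of_isLimitWord_nhdsGT hf hg (hi.mono hKE) (hwj.mono hKE))

lemma exists_letter_eventually_nhdsLT [NeZero d] (hF : ExpandingLift 1 F)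
    (hf : ContDiff ℝ 1 fun x : ℝ => f x) (hg : IsSubaction f (cmap F) g) (hK : IsClosed K)
    (hKE : K ⊆ Eset f (cmap F) g) (hxK : (x : Circle1) ∈ K)
    (hx : ¬ IsSupercriticalValue F d f K x) :
    ∃ a : Fin d, ∀ᶠ y in 𝓝[<] x, ∀ i : ℕ → Fin d, WordIn F i y K → i 0 = a := by
  refine exists_letter_eventually fun i j hi hj => ?_
  have hwi := hF.wordIn_of_isLimitWord hK nhdsWithin_le_nhds hi
  have hwj := hF.wordIn_of_isLimitWord hK nhdsWithin_le_nhds hj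
  exact hF.letter_zero_eq_of_not_isSupercriticalValue hf hxK hx hwi hwj <| le_antisymm
    (hF.le_hSumDeriv_of_isLimitWord_nhdsLT hf hg (hi.mono hKE) (hwj.mono hKE))
    (hF.le_hSumDeriv_of_isLimitWord_nhdsLT hf hg (hj.mono hKE) (hwi.mono hKE))

end ExpandingLift

end LimitWord

/-! ### Regular critical values -/

/-- Along the filter `l`, the preimage in `K` of a point `y` of `K` is unique and given by a
continuous inverse branch of `T`. -/
def HasInverseBranchAlong (T : Circle1 → Circle1) (K : Set Circle1) (l : Filter ℝ) : Prop :=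
  ∃ σ : ℝ → Circle1, Continuous σ ∧ (∀ y : ℝ, T (σ y) = y) ∧
    ∀ᶠ y : ℝ in l, (y : Circle1) ∈ K → T ⁻¹' {(y : Circle1)} ∩ K = {σ y}

section Regular

variable {T : Circle1 → Circle1} {K : Set Circle1}

lemma exists_continuousOn_section {σ : ℝ → Circle1} (hσ : Continuous σ)
    (hTσ : ∀ y : ℝ, T (σ y) = y) {a b : ℝ} (hab : b ≤ a + 1)
    (huniq : ∀ y ∈ Ioo a b, (y : Circle1) ∈ K → T ⁻¹' {(y : Circle1)} ∩ K = {σ y})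
    {C : Set Circle1} (hC : C ⊆ (↑) '' Ioo a b) :
    ∃ s : Circle1 → Circle1, ContinuousOn s C ∧ (∀ y ∈ C, T (s y) = y) ∧
      ∀ y ∈ K ∩ C, T ⁻¹' {y} ∩ K = {s y} := by
  let φ := AddCircle.openPartialHomeomorphCoe (1 : ℝ) a
  have hsource {t : ℝ} (ht : t ∈ Ioo a b) : t ∈ φ.source := Ioo_subset_Ioo_right hab ht
  have hsymm {t : ℝ} (ht : t ∈ Ioo a b) : φ.symm (t : Circle1) = t := φ.left_inv (hsource ht)
  refine ⟨fun z => σ (φ.symm z), hσ.comp_continuousOn (φ.continuousOn_symm.mono ?_),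
    fun y hy => ?_, fun y ⟨hyK, hy⟩ => ?_⟩
  · refine hC.trans ?_
    rintro _ ⟨t, ht, rfl⟩
    exact φ.map_source (hsource ht)
  · obtain ⟨t, ht, rfl⟩ := hC hy
    simp only [hsymm ht, hTσ]
  · obtain ⟨t, ht, rfl⟩ := hC hy
    simp only [hsymm ht, huniq t ht hyK]

lemma connectedComponentIn_image_coe_Ioo_diff_subset {u v x : ℝ} (hu : u < x) (hv : x < v)
    (huv : v ≤ u + 1) (b : Circle1) :
    connectedComponentIn ((↑) '' Ioo u v \ {(x : Circle1)}) b ⊆ (↑) '' Ioo u x ∨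
      connectedComponentIn ((↑) '' Ioo u v \ {(x : Circle1)}) b ⊆ (↑) '' Ioo x v := by
  have hopen : IsOpenMap ((↑) : ℝ → Circle1) := QuotientAddGroup.isOpenMap_coe
  have hdisj : Disjoint ((↑) '' Ioo u x : Set Circle1) ((↑) '' Ioo x v) :=
    disjoint_image_image fun y hy z hz hyz => (hy.2.trans hz.1).ne <|
      (AddCircle.coe_eq_coe_iff_of_mem_Ico (a := u) ⟨hy.1.le, by linarith [hy.2]⟩
        ⟨by linarith [hz.1], by linarith [hz.2]⟩).1 hyz
  refine IsPreconnected.subset_or_subset (hopen _ isOpen_Ioo) (hopen _ isOpen_Ioo) hdisj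
    ((connectedComponentIn_subset _ _).trans ?_) isPreconnected_connectedComponentIn
  rintro _ ⟨⟨t, ht, rfl⟩, htx⟩
  rcases lt_trichotomy t x with h | rfl | h
  · exact Or.inl ⟨t, ⟨ht.1, h⟩, rfl⟩
  · exact absurd rfl htx
  · exact Or.inr ⟨t, ⟨h, ht.2⟩, rfl⟩

lemma isRegularCriticalValue_of_hasInverseBranchAlong {x : ℝ}
    (hlt : HasInverseBranchAlong T K (𝓝[<] x)) (hgt : HasInverseBranchAlong T K (𝓝[>] x)) :
    IsRegularCriticalValue T K x := by
  obtain ⟨σ, hσ, hTσ, hσK⟩ := hlt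
  obtain ⟨ρ, hρ, hTρ, hρK⟩ := hgt
  obtain ⟨u, hu, huK⟩ :=
    (mem_nhdsLT_iff_exists_mem_Ico_Ioo_subset (show x - 1 / 2 < x by linarith)).1 hσK
  obtain ⟨v, hv, hvK⟩ :=
    (mem_nhdsGT_iff_exists_mem_Ioc_Ioo_subset (show x < x + 1 / 2 by linarith)).1 hρK
  have huv : v ≤ u + 1 := by linarith [hu.1, hv.2]
  refine ⟨(↑) '' Ioo u v, ?_, ?_, fun b _ => ?_⟩
  · exact QuotientAddGroup.isOpenMap_coe.image_mem_nhds (Ioo_mem_nhds hu.2 hv.1)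
  · exact (isConnected_Ioo (hu.2.trans hv.1)).image _ (AddCircle.continuous_mk' 1).continuousOn
  · rcases connectedComponentIn_image_coe_Ioo_diff_subset hu.2 hv.1 huv b with hC | hC
    · exact exists_continuousOn_section hσ hTσ (by linarith [hv.1]) huK hC
    · exact exists_continuousOn_section hρ hTρ (by linarith [hu.2]) hvK hC

end Regular

namespace ExpandingLift

variable {F : ℝ → ℝ} {e : ℤ} {K : Set Circle1}

lemma exists_wordIn (hF : ExpandingLift 1 F) (he : ∀ x, F (x + 1) = F x + e)
    (hK : K ⊆ cmap F '' K) {x : ℝ} {w : Circle1} (hw : w ∈ K) (hwx : cmap F w = x) :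
    ∃ i : ℕ → Fin e.natAbs,
      WordIn F i x K ∧ ((Function.invFun F (x + (i 0 : ℕ)) : ℝ) : Circle1) = w := by
  have hletter (t : {t : ℝ // (t : Circle1) ∈ K}) :
      ∃ a : Fin e.natAbs, ((Function.invFun F (t + (a : ℕ)) : ℝ) : Circle1) ∈ K := by
    obtain ⟨z, hz, hzt⟩ := hK t.2
    obtain ⟨a, ha⟩ := exists_letter hF.injective he hzt
    exact ⟨a, ha ▸ hz⟩
  choose L hL using hletter
  obtain ⟨a, ha⟩ := exists_letter hF.injective he hwx
  let s (n : ℕ) : {t : ℝ // (t : Circle1) ∈ K} :=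
    (fun t => ⟨_, hL t⟩)^[n] ⟨Function.invFun F (x + (a : ℕ)), ha ▸ hw⟩
  let i (n : ℕ) : Fin e.natAbs := n.casesOn a fun m => L (s m)
  have hs (n : ℕ) : tauIter F i (n + 1) x = s n := by
    induction n with
    | zero => rfl
    | succ n ih =>
      change Function.invFun F (tauIter F i (n + 1) x + (L (s n) : ℕ)) = s (n + 1)
      simp only [ih, s, Function.iterate_succ_apply']
  refine ⟨i, fun n hn => ?_, ha⟩
  obtain ⟨m, rfl⟩ := Nat.exists_eq_add_of_le' hn
  exact hs m ▸ (s m).2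

lemma hasInverseBranchAlong (hF : ExpandingLift 1 F) (he : ∀ x, F (x + 1) = F x + e)
    (hK : K ⊆ cmap F '' K) {l : Filter ℝ} {a : Fin e.natAbs}
    (ha : ∀ᶠ y in l, ∀ i : ℕ → Fin e.natAbs, WordIn F i y K → i 0 = a) :
    HasInverseBranchAlong (cmap F) K l := by
  refine ⟨fun y => (Function.invFun F (y + (a : ℕ)) : ℝ), ?_, fun y => ?_, ?_⟩
  · exact (AddCircle.continuous_mk' 1).comp
      (hF.continuous_invFun.comp (continuous_id.add continuous_const))
  · exact hF.cmap_tauIter_succ (fun _ => a) 0 y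
  · filter_upwards [ha] with y hy hyK
    have huniq : ∀ w ∈ cmap F ⁻¹' {(y : Circle1)} ∩ K,
        w = (Function.invFun F (y + (a : ℕ)) : ℝ) := by
      rintro w ⟨hwy, hw⟩
      obtain ⟨i, hi, rfl⟩ := hF.exists_wordIn he hK hw hwy
      rw [hy i hi]
    obtain ⟨w, hw, hwy⟩ := hK hyK
    exact eq_singleton_iff_nonempty_unique_mem.2 ⟨⟨w, hwy, hw⟩, huniq⟩

theorem sturmianLike_or_exists_isSupercriticalValue (hF : ExpandingLift 1 F)
    (he : ∀ x, F (x + 1) = F x + e) {f g : Circle1 → ℝ} (hf : ContDiff ℝ 1 fun x : ℝ => f x)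
    (hg : IsSubaction f (cmap F) g) (hK : IsClosed K) (hKE : K ⊆ Eset f (cmap F) g)
    (hKT : K ⊆ cmap F '' K) :
    SturmianLike (cmap F) K ∨ ∃ x : ℝ, IsSupercriticalValue F e.natAbs f K x := by
  refine or_iff_not_imp_right.2 fun hsuper z hz => ?_
  obtain ⟨x, rfl⟩ := QuotientAddGroup.mk_surjective z
  have hx := not_exists.1 hsuper x
  have : NeZero e.natAbs := ⟨Int.natAbs_ne_zero.2 (lift_degree_ne_zero hF.injective he)⟩
  obtain ⟨a, ha⟩ := hF.exists_letter_eventually_nhdsLT hf hg hK hKE hz.1 hx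
  obtain ⟨b, hb⟩ := hF.exists_letter_eventually_nhdsGT hf hg hK hKE hz.1 hx
  exact isRegularCriticalValue_of_hasInverseBranchAlong (hF.hasInverseBranchAlong he hKT ha)
    (hF.hasInverseBranchAlong he hKT hb)

end ExpandingLift

lemma AnalyticExpandingLift.expandingLift {F : ℝ → ℝ} {d : ℕ} (hF : AnalyticExpandingLift F d) :
    ExpandingLift 1 F :=
  ⟨contDiff_iff_contDiffAt.2 fun x => (hF.1 x).contDiffAt, ⟨d, hF.2.1⟩, hF.2.2.2.2.2⟩

theorem sturmian_or_supercritical_general (F : ℝ → ℝ) (e : ℤ) (hF : ExpandingLift 1 F)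
    (he : ∀ x : ℝ, F (x + 1) = F x + e) (f : Circle1 → ℝ)
    (hf : ContDiff ℝ 1 fun x : ℝ => f ↑x)
    (huniq : ∃! μ : Measure Circle1, IsMaximizing f (cmap F) μ) :
    SturmianLike (cmap F) (Kset f (cmap F)) ∨
      ∃ x : ℝ, IsSupercriticalValue F e.natAbs f (Kset f (cmap F)) x := by
  have hT := continuous_cmap hF.1.continuous he
  have hfc : Continuous f := (QuotientAddGroup.isQuotientMap_mk _).continuous_iff.2 hf.continuous
  rcases (Gset f (cmap F)).eq_empty_or_nonempty with hG | ⟨g, hg⟩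
  · exact Or.inl fun x hx => by simpa [Kset, hG] using hx.1
  · have hsub : {μ | IsMaximizing f (cmap F) μ}.Subsingleton := fun μ hμ ν hν =>
      huniq.unique hμ hν
    rw [kset_eq_lambda hT hfc hsub hg]
    exact hF.sturmianLike_or_exists_isSupercriticalValue he hf hg.2.1
      (isClosed_lambda hT hfc hg.2.1.1) (lambda_subset_eset f (cmap F) g)
      (lambda_subset_image hT hfc hg.2.1.1)

/-- Corollary 3.6: if `(f,T)` has a unique maximizing measure, then either `T|K(f,T)` is
Sturmian-like or `f` has a supercritical value. -/
theorem sturmian_or_supercritical (F : ℝ → ℝ) (d : ℕ) (hF : AnalyticExpandingLift F d)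
    (f : Circle1 → ℝ) (hf : ContDiff ℝ 1 fun x : ℝ => f ↑x)
    (huniq : ∃! μ : Measure Circle1, IsMaximizing f (cmap F) μ) :
    SturmianLike (cmap F) (Kset f (cmap F)) ∨
      ∃ x : ℝ, IsSupercriticalValue F d f (Kset f (cmap F)) x :=
  sturmian_or_supercritical_general F d hF.expandingLift hF.2.1 f hf huniq
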